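/- The total island boundary polynomial detects trees: a simple graph G on a finite vertex set with n ≥ 2 vertices is a tree (connected and acyclic) if and only if β_G(x) = (1+x)^{n−1} + (n−1)·(1+x)^{n−2} as polynomials with integer coefficients. -/

import Mathlib

open Polynomial

/-- `islandF G S` is the quantity `f_G(S) = 2·c_G(S) + e_G(S) − |S|`, where `c_G(S)`
and `e_G(S)` are the numbers of connected components and edges of the induced
subgraph `G[S]`.  For a planar graph it equals the total number of faces of a
planar embedding of `G[S]`, summed over connected components. -/
noncomputable def islandF {V : Type*} [Fintype V] [DecidableEq V]
    (G : SimpleGraph V) (S : Finset V) : ℤ :=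
  2 * Nat.card ((G.induce (S : Set V)).ConnectedComponent)
    + Nat.card ((G.induce (S : Set V)).edgeSet) - S.card

/-- The total island boundary polynomial `β_G(x) = Σ_{∅ ≠ S ⊆ V} f_G(S)·x^{|S|−1}`. -/
noncomputable def islandPoly {V : Type*} [Fintype V] [DecidableEq V]
    (G : SimpleGraph V) : Polynomial ℤ :=
  ∑ S ∈ Finset.univ.powerset.filter (fun S : Finset V => S.Nonempty),
    Polynomial.C (islandF G S) * Polynomial.X ^ (S.card - 1)

/-!
For every graph `H` one has `2 c + e - n = n - e + 2 μ`, where `μ = e + c - n` is the cyclomatic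
number. Summing over all induced subgraphs, and double counting the vertices and edges lying in a
vertex set `S`, gives for an arbitrary graph
`β_G = n (1 + x)^(n - 1) - e x (1 + x)^(n - 2) + 2 ∑_S μ(G[S]) x^(|S| - 1)`.
A forest has `μ = 0`, and so do its induced subgraphs, so the sum over `S` vanishes for a tree.
Conversely, graphs on two vertices are forests, so the coefficient of `x` determines `e`; if
`e = n - 1`, the polynomial is that of a tree only when the sum over `S` vanishes, and its
coefficient at `S = V` then says `c = 1`.
-/

open Finset

section SupersetSums

variable {α ι R : Type*} [Fintype α] [CommSemiring R]

lemma sum_superset_pow_card_sub [DecidableEq α] {k : ℕ} (T : Finset α) (hk : k ≤ #T) (x : R) :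
    ∑ S with T ⊆ S, x ^ (#S - k) = x ^ (#T - k) * (1 + x) ^ (Fintype.card α - #T) := by
  have reindex : ∑ S with T ⊆ S, x ^ (#S - k)
      = ∑ U ∈ Tᶜ.powerset, x ^ (#T - k) * (x ^ #U * 1 ^ (#Tᶜ - #U)) := by
    refine sum_nbij' (· \ T) (T ∪ ·) ?_ ?_ ?_ ?_ ?_
    · exact fun S _ ↦ mem_powerset.2 fun v hv ↦ by simp_all
    · simp
    · exact fun S hS ↦ union_sdiff_of_subset (mem_filter.1 hS).2
    · exact fun U hU ↦ union_sdiff_cancel_left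
        (disjoint_compl_right.mono_right (mem_powerset.1 hU))
    · intro S hS
      have hTS : T ⊆ S := (mem_filter.1 hS).2
      have := card_le_card hTS
      rw [one_pow, mul_one, ← pow_add, card_sdiff_of_subset hTS]
      congr 1
      omega
  rw [reindex, ← mul_sum, sum_pow_mul_eq_add_pow, card_compl, add_comm x]

lemma sum_card_filter_subset_mul_pow [DecidableEq α] {k m : ℕ} {s : Finset ι}
    {f : ι → Finset α} (hf : ∀ i ∈ s, #(f i) = m) (hk : k ≤ m) (x : R) :
    ∑ S, #{i ∈ s | f i ⊆ S} * x ^ (#S - k)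
      = #s * (x ^ (m - k) * (1 + x) ^ (Fintype.card α - m)) := by
  calc
    ∑ S, #{i ∈ s | f i ⊆ S} * x ^ (#S - k) = ∑ i ∈ s, ∑ S with f i ⊆ S, x ^ (#S - k) := by
      simp_rw [← nsmul_eq_mul, ← sum_const, sum_filter]
      exact sum_comm
    _ = ∑ i ∈ s, x ^ (m - k) * (1 + x) ^ (Fintype.card α - m) :=
      sum_congr rfl fun i hi ↦ by rw [sum_superset_pow_card_sub _ (hf i hi ▸ hk), hf i hi]
    _ = _ := by rw [sum_const, nsmul_eq_mul]

lemma sum_card_mul_pow_card_sub_one (x : R) :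
    ∑ S : Finset α, #S * x ^ (#S - 1)
      = Fintype.card α * (1 + x) ^ (Fintype.card α - 1) := by
  classical
  simpa using sum_card_filter_subset_mul_pow (s := univ) (f := fun v : α ↦ {v})
    (fun _ _ ↦ card_singleton _) le_rfl x

end SupersetSums

section EdgeCounts

variable {V : Type*} (G : SimpleGraph V)

lemma card_edgeSet_induce [Fintype V] [DecidableEq V] [DecidableRel G.Adj] (S : Finset V) :
    Nat.card (G.induce (S : Set V)).edgeSet = #{e ∈ G.edgeFinset | e.toFinset ⊆ S} := by
  rw [SimpleGraph.card_filter_edgeFinset_toFinset_subset, Nat.card_eq_fintype_card,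
    SimpleGraph.card_edgeSet]

lemma sum_card_edgeSet_induce_mul_pow_card_sub_one [Fintype V] {R : Type*} [CommSemiring R]
    (x : R) :
    ∑ S : Finset V, Nat.card (G.induce (S : Set V)).edgeSet * x ^ (#S - 1)
      = Nat.card G.edgeSet * (x * (1 + x) ^ (Fintype.card V - 2)) := by
  classical
  simp_rw [card_edgeSet_induce]
  rw [sum_card_filter_subset_mul_pow (m := 2) _ one_le_two, Nat.add_one_sub_one, pow_one,
    SimpleGraph.edgeFinset_card, Nat.card_eq_fintype_card]
  exact fun e he ↦ Sym2.card_toFinset_of_not_isDiag e (G.not_isDiag_of_mem_edgeFinset he)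

lemma sum_card_edgeSet_toSimpleGraph [Finite V] [Fintype G.ConnectedComponent] :
    ∑ c : G.ConnectedComponent, Nat.card c.toSimpleGraph.edgeSet = Nat.card G.edgeSet := by
  classical
  have := Fintype.ofFinite V
  have components_containing {e : Sym2 V} (he : e ∈ G.edgeFinset) :
      #{c : G.ConnectedComponent | e.toFinset ⊆ c.supp.toFinset} = 1 := by
    induction e with
    | _ v w =>
      have hvw : G.connectedComponentMk v = G.connectedComponentMk w :=
        SimpleGraph.ConnectedComponent.connectedComponentMk_eq_of_adj (by simpa using he)
      exact card_eq_one.2 ⟨G.connectedComponentMk v, by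
        ext c; simp [Sym2.toFinset_mk_eq, Set.insert_subset_iff, ← hvw, eq_comm]⟩
  calc
    ∑ c : G.ConnectedComponent, Nat.card c.toSimpleGraph.edgeSet
      = ∑ c : G.ConnectedComponent, #{e ∈ G.edgeFinset | e.toFinset ⊆ c.supp.toFinset} :=
      sum_congr rfl fun c _ ↦ by
        rw [← card_edgeSet_induce, Set.coe_toFinset]
        rfl
    _ = ∑ e ∈ G.edgeFinset, #{c : G.ConnectedComponent | e.toFinset ⊆ c.supp.toFinset} :=
      (sum_card_bipartiteAbove_eq_sum_card_bipartiteBelow _).symm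
    _ = Nat.card G.edgeSet := by
      rw [sum_congr rfl fun e he ↦ components_containing he, ← card_eq_sum_ones,
        SimpleGraph.edgeFinset_card, Nat.card_eq_fintype_card]

end EdgeCounts

section CyclomaticNumber

variable {V W : Type*} {G : SimpleGraph V} {H : SimpleGraph W}

/-- The cyclomatic number (circuit rank, first Betti number) `e + c - n` of a finite graph with `n`
vertices, `e` edges and `c` connected components. It takes values in `ℤ` to avoid truncated
subtraction. -/
noncomputable def cyclomaticNumber (G : SimpleGraph V) : ℤ :=
  Nat.card G.edgeSet + Nat.card G.ConnectedComponent - Nat.card V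

lemma cyclomaticNumber_congr (φ : G ≃g H) : cyclomaticNumber G = cyclomaticNumber H := by
  simp only [cyclomaticNumber, Nat.card_congr φ.mapEdgeSet,
    Nat.card_congr φ.connectedComponentEquiv, Nat.card_congr φ.toEquiv]

lemma cyclomaticNumber_eq_zero_of_isAcyclic [Finite V] (hG : G.IsAcyclic) :
    cyclomaticNumber G = 0 := by
  have := Fintype.ofFinite V
  have := Fintype.ofFinite G.ConnectedComponent
  have card_vertices : Nat.card V = Nat.card G.edgeSet + Nat.card G.ConnectedComponent :=
    calc
      Nat.card V = ∑ c : G.ConnectedComponent, Nat.card c := by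
        rw [← Nat.card_congr (Equiv.sigmaFiberEquiv G.connectedComponentMk), Nat.card_sigma]
        rfl
      _ = ∑ c : G.ConnectedComponent, (Nat.card c.toSimpleGraph.edgeSet + 1) :=
        sum_congr rfl fun c _ ↦
          (SimpleGraph.isTree_iff_connected_and_card.1 (hG.isTree_connectedComponent c)).2.symm
      _ = Nat.card G.edgeSet + Nat.card G.ConnectedComponent := by
        rw [sum_add_distrib, sum_card_edgeSet_toSimpleGraph, ← card_eq_sum_ones, card_univ,
          Nat.card_eq_fintype_card (α := G.ConnectedComponent)]
  rw [cyclomaticNumber, card_vertices]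
  push_cast
  ring

lemma isTree_iff_card_edgeSet_and_cyclomaticNumber [Finite V] :
    G.IsTree ↔ Nat.card G.edgeSet + 1 = Nat.card V ∧ cyclomaticNumber G = 0 := by
  refine ⟨fun hG ↦ ⟨(SimpleGraph.isTree_iff_connected_and_card.1 hG).2,
    cyclomaticNumber_eq_zero_of_isAcyclic hG.isAcyclic⟩, fun ⟨he, hμ⟩ ↦ ?_⟩
  have card_components : Nat.card G.ConnectedComponent = 1 := by
    rw [cyclomaticNumber] at hμ
    omega
  have : Subsingleton G.ConnectedComponent := (Nat.card_eq_one_iff_unique.1 card_components).1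
  have : Nonempty V := (Nat.card_pos_iff.1 (by omega)).1
  exact SimpleGraph.isTree_iff_connected_and_card.2
    ⟨⟨fun v w ↦ SimpleGraph.ConnectedComponent.eq.1 (Subsingleton.elim _ _)⟩, he⟩

end CyclomaticNumber

section CyclomaticPoly

variable {V : Type*} [Fintype V] (G : SimpleGraph V)

/-- The generating polynomial `∑_S μ(G[S]) x^(|S| - 1)` of the cyclomatic numbers of the induced
subgraphs, indexed by the same exponents as `islandPoly`. The empty set is allowed: its cyclomatic
number is `0`, so the truncated exponent is harmless. -/
noncomputable def cyclomaticPoly : ℤ[X] :=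
  ∑ S : Finset V, C (cyclomaticNumber (G.induce (S : Set V))) * X ^ (#S - 1)

lemma coeff_cyclomaticPoly_succ (k : ℕ) :
    (cyclomaticPoly G).coeff (k + 1)
      = ∑ S ∈ powersetCard (k + 2) (univ : Finset V), cyclomaticNumber (G.induce (S : Set V)) := by
  simp_rw [cyclomaticPoly, finsetSum_coeff, coeff_C_mul_X_pow, ← sum_filter]
  refine sum_congr ?_ fun _ _ ↦ rfl
  ext S
  rw [mem_filter_univ, mem_powersetCard_univ]
  omega

lemma coeff_one_cyclomaticPoly : (cyclomaticPoly G).coeff 1 = 0 := by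
  rw [coeff_cyclomaticPoly_succ]
  refine sum_eq_zero fun S hS ↦ cyclomaticNumber_eq_zero_of_isAcyclic (.of_card_le_two ?_)
  simp [(mem_powersetCard_univ.1 hS).le]

lemma coeff_card_sub_one_cyclomaticPoly (hV : 2 ≤ Fintype.card V) :
    (cyclomaticPoly G).coeff (Fintype.card V - 1) = cyclomaticNumber G := by
  obtain ⟨k, hk⟩ := Nat.exists_eq_add_of_le' hV
  rw [show Fintype.card V - 1 = k + 1 by omega, coeff_cyclomaticPoly_succ, ← hk, ← card_univ,
    powersetCard_self, sum_singleton, coe_univ, cyclomaticNumber_congr G.induceUnivIso]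

variable {G} in
lemma cyclomaticPoly_eq_zero_of_isAcyclic (hG : G.IsAcyclic) : cyclomaticPoly G = 0 :=
  sum_eq_zero fun S _ ↦ by
    rw [cyclomaticNumber_eq_zero_of_isAcyclic (hG.induce S), C_0, zero_mul]

end CyclomaticPoly

section IslandPoly

variable {V : Type*} [Fintype V] [DecidableEq V] (G : SimpleGraph V)

lemma islandF_eq_card_sub_card_edgeSet_add (S : Finset V) :
    islandF G S = #S - Nat.card (G.induce (S : Set V)).edgeSet
      + 2 * cyclomaticNumber (G.induce (S : Set V)) := by
  rw [islandF, cyclomaticNumber, Nat.card_coe_set_eq (S : Set V), Set.ncard_coe_finset]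
  ring

lemma islandF_empty : islandF G ∅ = 0 := by
  have : IsEmpty ((∅ : Finset V) : Set V) := by simp
  simp [islandF]

lemma islandPoly_eq_sum_univ : islandPoly G = ∑ S, C (islandF G S) * X ^ (#S - 1) := by
  rw [islandPoly, powerset_univ]
  refine sum_filter_of_ne fun S _ hS ↦ nonempty_iff_ne_empty.2 ?_
  rintro rfl
  simp [islandF_empty] at hS

lemma islandPoly_eq_add_two_mul_cyclomaticPoly :
    islandPoly G = (Fintype.card V : ℤ[X]) * (1 + X) ^ (Fintype.card V - 1)
      - (Nat.card G.edgeSet : ℤ[X]) * (X * (1 + X) ^ (Fintype.card V - 2))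
      + 2 * cyclomaticPoly G := by
  rw [islandPoly_eq_sum_univ, ← sum_card_mul_pow_card_sub_one,
    ← sum_card_edgeSet_induce_mul_pow_card_sub_one, cyclomaticPoly, mul_sum, ← sum_sub_distrib,
    ← sum_add_distrib]
  refine sum_congr rfl fun S _ ↦ ?_
  rw [islandF_eq_card_sub_card_edgeSet_add]
  simp only [C_add, C_sub, C_mul, map_natCast, map_ofNat]
  ring

lemma islandPoly_sub_one_add_X_pow_add (hV : 2 ≤ Fintype.card V) :
    islandPoly G - ((1 + X) ^ (Fintype.card V - 1)
        + C ((Fintype.card V - 1 : ℕ) : ℤ) * (1 + X) ^ (Fintype.card V - 2))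
      = C ((Fintype.card V : ℤ) - 1 - Nat.card G.edgeSet) * (X * (1 + X) ^ (Fintype.card V - 2))
        + 2 * cyclomaticPoly G := by
  obtain ⟨k, hk⟩ := Nat.exists_eq_add_of_le' hV
  rw [islandPoly_eq_add_two_mul_cyclomaticPoly, hk, show k + 2 - 1 = k + 1 by omega,
    Nat.add_sub_cancel]
  simp only [C_sub, map_natCast, C_1]
  push_cast
  ring

lemma islandPoly_eq_one_add_X_pow_add_iff (hV : 2 ≤ Fintype.card V) :
    islandPoly G = (1 + X) ^ (Fintype.card V - 1)
        + C ((Fintype.card V - 1 : ℕ) : ℤ) * (1 + X) ^ (Fintype.card V - 2)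
      ↔ Nat.card G.edgeSet + 1 = Nat.card V ∧ cyclomaticPoly G = 0 := by
  rw [← sub_eq_zero, islandPoly_sub_one_add_X_pow_add G hV, Nat.card_eq_fintype_card (α := V)]
  have edges_iff : Nat.card G.edgeSet + 1 = Fintype.card V
      ↔ (Fintype.card V : ℤ) - 1 - Nat.card G.edgeSet = 0 := by omega
  rw [edges_iff]
  refine ⟨fun h ↦ ?_, fun ⟨he, hcyc⟩ ↦ by rw [he, hcyc, C_0, zero_mul, mul_zero, add_zero]⟩
  have he : (Fintype.card V : ℤ) - 1 - Nat.card G.edgeSet = 0 := by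
    have coeff_one := congrArg (coeff · 1) h
    rwa [coeff_add, coeff_C_mul, coeff_X_mul _ 0, coeff_one_add_X_pow, coeff_ofNat_mul,
      coeff_one_cyclomaticPoly, Nat.choose_zero_right, Nat.cast_one, mul_one, mul_zero, add_zero,
      coeff_zero] at coeff_one
  rw [he, C_0, zero_mul, zero_add] at h
  exact ⟨he, (mul_eq_zero.1 h).resolve_left two_ne_zero⟩

end IslandPoly

theorem islandPoly_detects_trees {V : Type*} [Fintype V] [DecidableEq V]
    (G : SimpleGraph V) (hn : 2 ≤ Fintype.card V) :
    G.IsTree ↔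
      islandPoly G
        = (1 + Polynomial.X) ^ (Fintype.card V - 1)
          + Polynomial.C ((Fintype.card V - 1 : ℕ) : ℤ)
              * (1 + Polynomial.X) ^ (Fintype.card V - 2) := by
  rw [islandPoly_eq_one_add_X_pow_add_iff G hn]
  refine ⟨fun hG ↦ ⟨(isTree_iff_card_edgeSet_and_cyclomaticNumber.1 hG).1,
    cyclomaticPoly_eq_zero_of_isAcyclic hG.isAcyclic⟩, fun ⟨he, hcyc⟩ ↦ ?_⟩
  refine isTree_iff_card_edgeSet_and_cyclomaticNumber.2 ⟨he, ?_⟩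
  rw [← coeff_card_sub_one_cyclomaticPoly G hn, hcyc, coeff_zero]
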